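/- arXiv:2405.16043 — 3 statements merged into one kernel-verified Lean document; each statement's English description precedes it below -/
import Mathlib

section
/- (Coverage expansion under weaker assumptions.) Fix a label i, c > 0, q ≥ 0 and η ≥ 0. Suppose M_η(T_i, F) satisfies (c,q,η)-robust expansion on (S_i^good, T_i). Then every classifier f ∈ F satisfies err(f, y | T_i) ≤ P(X \ R_η(f) | T_i) + max( q, err(f, ỹ | S_i)/(c·(1 − α_i)) ). -/
open Finset
open scoped Classical

noncomputable section

variable {X Y : Type*} [Fintype X] [DecidableEq X] [DecidableEq Y]

/-- Probability of a finite set of points under the weight function `μ`. -/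
def Pw (μ : X → ℝ) (A : Finset X) : ℝ := ∑ x ∈ A, μ x

/-- Conditional probability `P(A | B) = P(A ∩ B) / P(B)`. -/
def cPw (μ : X → ℝ) (A B : Finset X) : ℝ := Pw μ (A ∩ B) / Pw μ B

/-- `err(f, g | U) = P({x : f x ≠ g x} | U)`. -/
def errP {Z : Type*} (μ : X → ℝ) (f g : X → Z) (U : Finset X) : ℝ :=
  cPw μ (univ.filter fun x => f x ≠ g x) U

/-- Neighborhood of a set: `N(A) = ⋃_{x ∈ A} N(x)`. -/
def nbhd (N : X → Finset X) (A : Finset X) : Finset X := A.biUnion N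

/-- `r(f, x) = P({x' : f x' ≠ f x} | N(x))`. -/
def rob (μ : X → ℝ) (N : X → Finset X) (f : X → Y) (x : X) : ℝ :=
  cPw μ (univ.filter fun x' => f x' ≠ f x) (N x)

/-- `R_η(f) = {x : r(f,x) ≤ η}`, the set of η-robust points of `f`. -/
def Rset (μ : X → ℝ) (N : X → Finset X) (η : ℝ) (f : X → Y) : Finset X :=
  univ.filter fun x => rob μ N f x ≤ η

/-- Edge weight `w(x, x') = P({x})·P({x'})·1[x ∈ N(x')]`. -/
def wE (μ : X → ℝ) (N : X → Finset X) (x x' : X) : ℝ :=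
  μ x * μ x' * (if x ∈ N x' then 1 else 0)

/-- `w(V, U) = Σ_{x ∈ V, x' ∈ U} w(x, x')`. -/
def wS (μ : X → ℝ) (N : X → Finset X) (V U : Finset X) : ℝ :=
  ∑ x ∈ V, ∑ x' ∈ U, wE μ N x x'

/-- `P_{1-η}(U, A)`: the η-robust neighborhood size of `U` in `A`. -/
def robNbhdSize (μ : X → ℝ) (N : X → Finset X) (η : ℝ) (U A : Finset X) : ℝ :=
  sInf {p : ℝ | ∃ V : Finset X,
    (1 - η) * wS μ N (nbhd N U) U ≤ wS μ N V U ∧ p = cPw μ V A}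

/-- `M` satisfies `(c, q, η)`-robust expansion on `(A, B)`. -/
def RobustExpansion (μ : X → ℝ) (N : X → Finset X) (c q η : ℝ)
    (M : Set (Finset X)) (A B : Finset X) : Prop :=
  ∀ U ∈ M, cPw μ U B > q → robNbhdSize μ N η U A > c * cPw μ U B

/-- `M` satisfies `(c, q)`-expansion on `(A, B)` (the `η = 0` case). -/
def Expansion (μ : X → ℝ) (N : X → Finset X) (c q : ℝ)
    (M : Set (Finset X)) (A B : Finset X) : Prop :=
  ∀ U ∈ M, cPw μ U B > q → cPw μ (nbhd N U) A > c * cPw μ U B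

/-- Covered set `S = {x : ỹ x ≠ ∅}`. -/
def Scov (yt : X → Option Y) : Finset X := univ.filter fun x => yt x ≠ none

/-- `S_i = S ∩ X_i`. -/
def SiSet (y : X → Y) (yt : X → Option Y) (i : Y) : Finset X :=
  univ.filter fun x => yt x ≠ none ∧ y x = i

/-- `T_i = T ∩ X_i`. -/
def TiSet (y : X → Y) (yt : X → Option Y) (i : Y) : Finset X :=
  univ.filter fun x => yt x = none ∧ y x = i

/-- `S_i^good = {x ∈ S_i : ỹ x = y x}`. -/
def SiGood (y : X → Y) (yt : X → Option Y) (i : Y) : Finset X :=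
  univ.filter fun x => yt x = some (y x) ∧ y x = i

/-- `S_i^bad = S_i \ S_i^good`. -/
def SiBad (y : X → Y) (yt : X → Option Y) (i : Y) : Finset X :=
  SiSet y yt i \ SiGood y yt i

/-- `α_i = P(S_i^bad | S_i)`. -/
def alphaW (μ : X → ℝ) (y : X → Y) (yt : X → Option Y) (i : Y) : ℝ :=
  cPw μ (SiBad y yt i) (SiSet y yt i)

/-- `M_η(B, F) = {R_η(f) ∩ U(B,f) : f ∈ F}`, the η-robust mistake sets on `B`. -/
def MFam (μ : X → ℝ) (N : X → Finset X) (η : ℝ) (y : X → Y)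
    (B : Finset X) (F : Set (X → Y)) : Set (Finset X) :=
  {A | ∃ f ∈ F, A = Rset μ N η f ∩ (B.filter fun x => f x ≠ y x)}

/-- `M'_η(B, F) = {R_η(f) ∩ (B \ U(B,f)) : f ∈ F}`, the η-robust non-mistake sets on `B`. -/
def MFam' (μ : X → ℝ) (N : X → Finset X) (η : ℝ) (y : X → Y)
    (B : Finset X) (F : Set (X → Y)) : Set (Finset X) :=
  {A | ∃ f ∈ F, A = Rset μ N η f ∩ (B.filter fun x => f x = y x)}

/-!
Apart from the non-robust points, the mistakes of `f` on `T_i` form a robust mistake set `U`, and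
`f ≠ i` on `U`. A robust point gives at least a `1 - η` fraction of its neighborhood the label it
has itself, so `V = {f ≠ i}` carries at least a `1 - η` fraction of the edge weight at `U`.
Expansion then says that `P(U | T_i) > q` forces `c · P(U | T_i) < P(V | S_i^good)`. On `S_i^good`
the pseudolabel is `i`, so `f` disagrees with it throughout `V ∩ S_i^good`; passing from
`S_i^good` to `S_i` costs the factor `P(S_i^good | S_i) = 1 - α_i`.
-/

section CoverageExpansion

variable {α β : Type*} {μ : α → ℝ} {N : α → Finset α} {A B U V : Finset α} {c q η : ℝ}

section Probability

lemma Pw_nonneg (hμ : ∀ x, 0 ≤ μ x) (A : Finset α) : 0 ≤ Pw μ A :=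
  sum_nonneg fun x _ => hμ x

lemma Pw_mono (hμ : ∀ x, 0 ≤ μ x) (hAB : A ⊆ B) : Pw μ A ≤ Pw μ B :=
  sum_le_sum_of_subset_of_nonneg hAB fun x _ _ => hμ x

variable [DecidableEq α]

lemma Pw_union_le (hμ : ∀ x, 0 ≤ μ x) (A B : Finset α) : Pw μ (A ∪ B) ≤ Pw μ A + Pw μ B :=
  calc
    Pw μ (A ∪ B) ≤ Pw μ (A ∪ B) + Pw μ (A ∩ B) := le_add_of_nonneg_right (Pw_nonneg hμ _)
    _ = Pw μ A + Pw μ B := sum_union_inter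

lemma cPw_nonneg (hμ : ∀ x, 0 ≤ μ x) (A B : Finset α) : 0 ≤ cPw μ A B :=
  div_nonneg (Pw_nonneg hμ _) (Pw_nonneg hμ _)

lemma cPw_mul_Pw (hB : Pw μ B ≠ 0) (A : Finset α) : cPw μ A B * Pw μ B = Pw μ (A ∩ B) :=
  div_mul_cancel₀ _ hB

lemma cPw_le_iff (hB : 0 < Pw μ B) {t : ℝ} : cPw μ A B ≤ t ↔ Pw μ (A ∩ B) ≤ t * Pw μ B :=
  div_le_iff₀ hB

end Probability

section Expansion

variable [DecidableEq α]

lemma wS_eq_sum_mul_Pw (V U : Finset α) : wS μ N V U = ∑ x ∈ U, μ x * Pw μ (V ∩ N x) := by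
  simp only [wS, wE, Pw, mul_sum, ← filter_mem_eq_inter, sum_filter]
  rw [sum_comm]
  refine sum_congr rfl fun x' _ => sum_congr rfl fun x _ => ?_
  split_ifs <;> ring

lemma wS_nbhd (U : Finset α) : wS μ N (nbhd N U) U = ∑ x ∈ U, μ x * Pw μ (N x) := by
  rw [wS_eq_sum_mul_Pw]
  refine sum_congr rfl fun x hx => ?_
  rw [inter_eq_right.mpr (show N x ⊆ nbhd N U from subset_biUnion_of_mem N hx)]

lemma robNbhdSize_le_cPw (hμ : ∀ x, 0 ≤ μ x)
    (hV : (1 - η) * wS μ N (nbhd N U) U ≤ wS μ N V U) :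
    robNbhdSize μ N η U A ≤ cPw μ V A := by
  refine csInf_le ⟨0, ?_⟩ ⟨V, hV, rfl⟩
  rintro _ ⟨W, -, rfl⟩
  exact cPw_nonneg hμ W A

lemma RobustExpansion.cPw_le_max {M : Set (Finset α)}
    (h : RobustExpansion μ N c q η M A B) (hc : 0 < c) (hU : U ∈ M) :
    cPw μ U B ≤ max q (robNbhdSize μ N η U A / c) := by
  rcases le_or_gt (cPw μ U B) q with hq | hq
  · exact hq.trans (le_max_left _ _)
  · exact le_max_of_le_right ((le_div_iff₀' hc).mpr (h U hU hq).le)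

end Expansion

section Robustness

variable [Fintype α] [DecidableEq α] [DecidableEq β] {f y : α → β}

lemma one_sub_mul_Pw_le_of_mem_Rset {x : α} (hμ : ∀ x, 0 ≤ μ x) (hN : 0 < Pw μ (N x))
    (hx : x ∈ Rset μ N η f) (hV : ∀ x', f x' = f x → x' ∈ V) :
    (1 - η) * Pw μ (N x) ≤ Pw μ (V ∩ N x) := by
  set D := univ.filter fun x' => f x' ≠ f x
  have disagree_le : Pw μ (D ∩ N x) ≤ η * Pw μ (N x) := (cPw_le_iff hN).mp (mem_filter.mp hx).2
  have cover : N x ⊆ D ∩ N x ∪ V ∩ N x := by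
    intro x' hx'
    by_cases h : f x' = f x
    · exact mem_union_right _ (mem_inter.mpr ⟨hV x' h, hx'⟩)
    · exact mem_union_left _ (mem_inter.mpr ⟨mem_filter.mpr ⟨mem_univ _, h⟩, hx'⟩)
  linarith [(Pw_mono hμ cover).trans (Pw_union_le hμ _ _)]

lemma one_sub_mul_wS_nbhd_le_of_subset_Rset (hμ : ∀ x, 0 ≤ μ x) (hN : ∀ x ∈ U, 0 < Pw μ (N x))
    (hU : U ⊆ Rset μ N η f) (hV : ∀ x ∈ U, ∀ x', f x' = f x → x' ∈ V) :
    (1 - η) * wS μ N (nbhd N U) U ≤ wS μ N V U := by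
  rw [wS_nbhd, wS_eq_sum_mul_Pw, mul_sum]
  refine sum_le_sum fun x hx => ?_
  rw [mul_left_comm]
  exact mul_le_mul_of_nonneg_left
    (one_sub_mul_Pw_le_of_mem_Rset hμ (hN x hx) (hU hx) (hV x hx)) (hμ x)

/-- The `η`-robust mistake set `R_η(f) ∩ U(B,f)` of a single classifier `f` on `B`; the members of
`MFam μ N η y B F` are these sets for `f ∈ F`. -/
def robustMistakes (μ : α → ℝ) (N : α → Finset α) (η : ℝ) (y : α → β) (B : Finset α)
    (f : α → β) : Finset α :=
  Rset μ N η f ∩ B.filter fun x => f x ≠ y x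

lemma robustMistakes_mem_MFam {F : Set (α → β)} (hf : f ∈ F) :
    robustMistakes μ N η y B f ∈ MFam μ N η y B F :=
  ⟨f, hf, rfl⟩

lemma errP_le_cPw_add_cPw_robustMistakes (hμ : ∀ x, 0 ≤ μ x) (hB : 0 < Pw μ B)
    (N : α → Finset α) (η : ℝ) (f y : α → β) :
    errP μ f y B ≤
      cPw μ (univ \ Rset μ N η f) B + cPw μ (robustMistakes μ N η y B f) B := by
  rw [errP, cPw_le_iff hB, add_mul, cPw_mul_Pw hB.ne', cPw_mul_Pw hB.ne']
  refine (Pw_mono hμ fun x hx => ?_).trans (Pw_union_le hμ _ _)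
  simp only [robustMistakes, mem_inter, mem_filter, mem_univ, true_and, mem_union,
    mem_sdiff] at hx ⊢
  tauto

lemma robNbhdSize_robustMistakes_le {i : β} (hμ : ∀ x, 0 ≤ μ x) (hN : ∀ x ∈ B, 0 < Pw μ (N x))
    (hB : ∀ x ∈ B, y x = i) :
    robNbhdSize μ N η (robustMistakes μ N η y B f) A ≤ cPw μ (univ.filter fun x => f x ≠ i) A := by
  have mistake : ∀ x ∈ robustMistakes μ N η y B f, x ∈ B ∧ f x ≠ y x := fun x hx =>
    mem_filter.mp (mem_inter.mp hx).2
  refine robNbhdSize_le_cPw hμ <| one_sub_mul_wS_nbhd_le_of_subset_Rset hμ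
    (fun x hx => hN x (mistake x hx).1) inter_subset_left fun x hx x' hx' => ?_
  obtain ⟨hxB, hne⟩ := mistake x hx
  exact mem_filter.mpr ⟨mem_univ _, hx' ▸ hB x hxB ▸ hne⟩

end Robustness

section Pseudolabels

variable [Fintype α] [DecidableEq β] {f y : α → β} {yt : α → Option β} {i : β}

lemma SiGood_subset_SiSet (y : α → β) (yt : α → Option β) (i : β) :
    SiGood y yt i ⊆ SiSet y yt i :=
  monotone_filter_right _ fun _ _ h => ⟨by simp [h.1], h.2⟩

variable [DecidableEq α]

lemma one_sub_alphaW (hS : Pw μ (SiSet y yt i) ≠ 0) :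
    1 - alphaW μ y yt i = Pw μ (SiGood y yt i) / Pw μ (SiSet y yt i) := by
  have bad_add_good : Pw μ (SiBad y yt i) + Pw μ (SiGood y yt i) = Pw μ (SiSet y yt i) :=
    sum_sdiff (SiGood_subset_SiSet y yt i)
  have bad_subset : SiBad y yt i ⊆ SiSet y yt i := sdiff_subset
  rw [alphaW, cPw, inter_eq_left.mpr bad_subset, eq_div_iff hS, sub_mul, div_mul_cancel₀ _ hS,
    one_mul, ← bad_add_good, add_sub_cancel_left]

lemma cPw_ne_SiGood_le_errP_div (hμ : ∀ x, 0 ≤ μ x) (hG : 0 < Pw μ (SiGood y yt i)) :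
    cPw μ (univ.filter fun x => f x ≠ i) (SiGood y yt i) ≤
      errP μ (fun x => some (f x)) yt (SiSet y yt i) / (1 - alphaW μ y yt i) := by
  have hS : 0 < Pw μ (SiSet y yt i) := hG.trans_le (Pw_mono hμ (SiGood_subset_SiSet y yt i))
  rw [one_sub_alphaW hS.ne', errP, cPw, cPw, div_div_div_cancel_right₀ hS.ne']
  refine div_le_div_of_nonneg_right (Pw_mono hμ fun x hx => ?_) hG.le
  obtain ⟨hne, hgood⟩ := mem_inter.mp hx
  have hyt : yt x = some i := by
    obtain ⟨hyt, hy⟩ := (mem_filter.mp hgood).2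
    rw [hyt, hy]
  refine mem_inter.mpr ⟨?_, SiGood_subset_SiSet y yt i hgood⟩
  simpa [hyt] using hne

theorem coverage_expansion_weaker_general {F : Set (α → β)} (hμ : ∀ x, 0 ≤ μ x)
    (hNpos : ∀ x ∈ TiSet y yt i, 0 < Pw μ (N x))
    (hSg : 0 < Pw μ (SiGood y yt i)) (hTi : 0 < Pw μ (TiSet y yt i)) (hc : 0 < c)
    (hexp : RobustExpansion μ N c q η (MFam μ N η y (TiSet y yt i) F)
      (SiGood y yt i) (TiSet y yt i)) (hf : f ∈ F) :
    errP μ f y (TiSet y yt i) ≤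
      cPw μ (univ \ Rset μ N η f) (TiSet y yt i)
        + max q
            (errP μ (fun x => some (f x)) yt (SiSet y yt i)
              / (c * (1 - alphaW μ y yt i))) := by
  set T := TiSet y yt i
  set U := robustMistakes μ N η y T f
  set e := errP μ (fun x => some (f x)) yt (SiSet y yt i)
  have size_le : robNbhdSize μ N η U (SiGood y yt i) ≤ e / (1 - alphaW μ y yt i) :=
    (robNbhdSize_robustMistakes_le hμ hNpos fun _ hx => (mem_filter.mp hx).2.2).trans
      (cPw_ne_SiGood_le_errP_div hμ hSg)
  calc
    errP μ f y T ≤ cPw μ (univ \ Rset μ N η f) T + cPw μ U T :=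
      errP_le_cPw_add_cPw_robustMistakes hμ hTi N η f y
    _ ≤ cPw μ (univ \ Rset μ N η f) T + max q (robNbhdSize μ N η U (SiGood y yt i) / c) := by
      gcongr
      exact hexp.cPw_le_max hc (robustMistakes_mem_MFam hf)
    _ ≤ cPw μ (univ \ Rset μ N η f) T + max q (e / (1 - alphaW μ y yt i) / c) := by gcongr
    _ = cPw μ (univ \ Rset μ N η f) T + max q (e / (c * (1 - alphaW μ y yt i))) := by
      rw [div_div, mul_comm c]

end Pseudolabels

end CoverageExpansion

/-- Coverage expansion under weaker assumptions,
Theorem `thm:covex-direct-genrobust-apdx`. -/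
theorem coverage_expansion_weaker
    (μ : X → ℝ) (N : X → Finset X) (y : X → Y) (yt : X → Option Y)
    (F : Set (X → Y)) (i : Y) (c q η : ℝ)
    (hμ : ∀ x, 0 ≤ μ x) (hμ1 : ∑ x, μ x = 1)
    (hNsym : ∀ x x', x ∈ N x' ↔ x' ∈ N x)
    (hNpos : ∀ x, 0 < Pw μ (N x))
    (hSi : 0 < Pw μ (SiSet y yt i))
    (hSg : 0 < Pw μ (SiGood y yt i))
    (hSb : 0 < Pw μ (SiBad y yt i))
    (hTi : 0 < Pw μ (TiSet y yt i))
    (hα0 : 0 < alphaW μ y yt i) (hα : alphaW μ y yt i < 1 / 2)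
    (hc : 0 < c) (hq : 0 ≤ q) (hη : 0 ≤ η)
    (hexp : RobustExpansion μ N c q η (MFam μ N η y (TiSet y yt i) F)
      (SiGood y yt i) (TiSet y yt i)) :
    ∀ f ∈ F,
      errP μ f y (TiSet y yt i) ≤
        cPw μ (univ \ Rset μ N η f) (TiSet y yt i)
          + max q
              (errP μ (fun x => some (f x)) yt (SiSet y yt i)
                / (c * (1 - alphaW μ y yt i))) :=
  fun _ hf =>
    coverage_expansion_weaker_general hμ (fun x _ => hNpos x) hSg hTi hc hexp hf
end
end

section
/- (Conditionally independent views give perfect robustness and exact expansion.) Suppose X = X1 × X2 for finite sets X1, X2, the pseudolabeler depends only on the first view (ỹ(x1,x2) = ỹ1(x1) for some ỹ1 : X1 → Y ∪ {∅}), and the two views are conditionally independent given the true label: for all A ⊆ X1, B ⊆ X2 and every label i with P(X_i) > 0, P({(x1,x2) : x1 ∈ A, x2 ∈ B} | X_i) = P({x : x1 ∈ A} | X_i)·P({x : x2 ∈ B} | X_i). Define the neighborhood N(x1,x2) = {(x1', x2) : x1' ∈ X1}. Then: (a) every classifier g : X → Y that depends only on the second view (g(x1,x2) = g2(x2)) satisfies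 r(g,x) = 0 at every x ∈ X, i.e., g is adversarially robust everywhere; and (b) for every such g and every label i, if U = {x ∈ T_i : g(x) ≠ y(x)} has P(U | T_i) > 0, then P(N(U) | S_i^good) = P(U | T_i). -/
/-!
Since `N` forgets the first view, `N(U)` is an event of the second view, whereas membership in the
uncovered set, or in the set of points pseudolabeled `i`, is an event of the first view. Given the
label `i` the two are independent, so conditioning further on either first-view event does not
change the probability of `N(U)`: `P(N(U) | S_i^good) = P(N(U) | X_i) = P(N(U) | T_i)`. Within
`T_i` a mistake of `g` is determined by the second view, hence `N(U) ∩ T_i = U` and the last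
probability is `P(U | T_i)`.
-/

open Finset
open scoped Classical

noncomputable section

variable {X Y : Type*} [Fintype X] [DecidableEq X] [DecidableEq Y]

section Conditioning

variable {α : Type*} [DecidableEq α]

theorem cPw_inter_right (μ : α → ℝ) (A B : Finset α) : cPw μ (A ∩ B) B = cPw μ A B := by
  rw [cPw, cPw, inter_assoc, inter_self]

theorem cPw_eq_zero_of_disjoint (μ : α → ℝ) {A B : Finset α} (h : Disjoint A B) :
    cPw μ A B = 0 := by
  rw [cPw, disjoint_iff_inter_eq_empty.mp h, Pw, sum_empty, zero_div]

theorem cPw_inter_eq_of_cPw_inter_eq_mul {μ : α → ℝ} {A B C : Finset α}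
    (hind : cPw μ (A ∩ B) C = cPw μ A C * cPw μ B C)
    (hC : Pw μ C ≠ 0) (hAC : Pw μ (A ∩ C) ≠ 0) :
    cPw μ B (A ∩ C) = cPw μ B C := by
  have chain : cPw μ (A ∩ B) C = cPw μ A C * cPw μ B (A ∩ C) := by
    have hsets : A ∩ B ∩ C = B ∩ (A ∩ C) := by rw [inter_comm A B, inter_assoc]
    rw [cPw, cPw, cPw, hsets, mul_comm, div_mul_div_cancel₀ hAC]
  have hA : cPw μ A C ≠ 0 := div_ne_zero hAC hC
  exact mul_left_cancel₀ hA (chain.symm.trans hind)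

end Conditioning

section FiberNeighborhoods

variable {Z : Type*} [DecidableEq Z]

/-- The neighborhood function of a view `v`: the neighbors of `x` are the points that `v` does not
distinguish from `x`. For `v = Prod.snd` these are the points obtained by resampling the first
view. -/
def fiberNbhd (v : X → Z) (x : X) : Finset X := univ.filter fun x' => v x' = v x

theorem mem_nbhd_fiberNbhd {v : X → Z} {U : Finset X} {x : X} :
    x ∈ nbhd (fiberNbhd v) U ↔ ∃ u ∈ U, v u = v x := by
  simp only [nbhd, fiberNbhd, mem_biUnion, mem_filter, mem_univ, true_and, eq_comm]

theorem nbhd_fiberNbhd_eq_filter_mem_image (v : X → Z) (U : Finset X) :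
    nbhd (fiberNbhd v) U = univ.filter fun x => v x ∈ U.image v := by
  ext x
  simp only [mem_nbhd_fiberNbhd, mem_filter, mem_univ, true_and, mem_image]

theorem nbhd_fiberNbhd_filter_inter {v : X → Z} {V : Finset X} {p : X → Prop} [DecidablePred p]
    (hp : ∀ u ∈ V, ∀ x ∈ V, v u = v x → p u → p x) :
    nbhd (fiberNbhd v) (V.filter p) ∩ V = V.filter p := by
  ext x
  simp only [mem_inter, mem_nbhd_fiberNbhd, mem_filter]
  constructor
  · rintro ⟨⟨u, ⟨hu, hpu⟩, hux⟩, hx⟩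
    exact ⟨hx, hp u hu x hx hux hpu⟩
  · rintro ⟨hx, hpx⟩
    exact ⟨⟨x, ⟨hx, hpx⟩, rfl⟩, hx⟩

theorem rob_fiberNbhd_eq_zero (μ : X → ℝ) {v : X → Z} {g : X → Y} (hg : g.FactorsThrough v)
    (x : X) : rob μ (fiberNbhd v) g x = 0 :=
  cPw_eq_zero_of_disjoint μ <| disjoint_filter.mpr fun _ _ hne hvx => hne (hg hvx)

end FiberNeighborhoods

theorem siGood_eq_filter {α : Type*} [Fintype α] (y : α → Y) (yt : α → Option Y) (i : Y) :
    SiGood y yt i = univ.filter fun x => yt x = some i ∧ y x = i := by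
  ext x
  simp +contextual only [SiGood, mem_filter, mem_univ, true_and, and_congr_left_iff, implies_true]

section Views

variable {V W : Type*} [DecidableEq V] [DecidableEq W]

/-- The views `v` and `w` are conditionally independent given the label `y`. Labels of probability
zero impose no condition. -/
def CondIndepViews (μ : X → ℝ) (y : X → Y) (v : X → V) (w : X → W) : Prop :=
  ∀ (A : Finset V) (B : Finset W) (i : Y), 0 < Pw μ (univ.filter fun x => y x = i) →
    cPw μ (univ.filter fun x => v x ∈ A ∧ w x ∈ B) (univ.filter fun x => y x = i) =
      cPw μ (univ.filter fun x => v x ∈ A) (univ.filter fun x => y x = i) *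
        cPw μ (univ.filter fun x => w x ∈ B) (univ.filter fun x => y x = i)

namespace CondIndepViews

variable {μ : X → ℝ} {y : X → Y} {v : X → V} {w : X → W}

theorem cPw_filter_mem_and_label (h : CondIndepViews μ y v w) (A : Finset V) (B : Finset W) {i : Y}
    (hi : 0 < Pw μ (univ.filter fun x => y x = i))
    (hA : Pw μ (univ.filter fun x => v x ∈ A ∧ y x = i) ≠ 0) :
    cPw μ (univ.filter fun x => w x ∈ B) (univ.filter fun x => v x ∈ A ∧ y x = i) =
      cPw μ (univ.filter fun x => w x ∈ B) (univ.filter fun x => y x = i) := by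
  have hind := h A B i hi
  rw [filter_and] at hind hA ⊢
  exact cPw_inter_eq_of_cPw_inter_eq_mul hind hi.ne' hA

theorem cPw_nbhd_filter_and_label (h : CondIndepViews μ y v w) (U : Finset X) {p : X → Prop}
    [DecidablePred p] (hp : p.FactorsThrough v) {i : Y}
    (hi : 0 < Pw μ (univ.filter fun x => y x = i))
    (hpi : Pw μ (univ.filter fun x => p x ∧ y x = i) ≠ 0) :
    cPw μ (nbhd (fiberNbhd w) U) (univ.filter fun x => p x ∧ y x = i) =
      cPw μ (nbhd (fiberNbhd w) U) (univ.filter fun x => y x = i) := by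
  have hmem (x : X) : p x ↔ v x ∈ (univ.filter p).image v := by
    simp only [mem_image, mem_filter, mem_univ, true_and]
    exact ⟨fun hx => ⟨x, hx, rfl⟩, fun ⟨_, ha, hax⟩ => hp hax ▸ ha⟩
  have hfilter : (univ.filter fun x => p x ∧ y x = i) =
      univ.filter fun x => v x ∈ (univ.filter p).image v ∧ y x = i :=
    filter_congr fun x _ => and_congr_left' (hmem x)
  rw [hfilter] at hpi ⊢
  rw [nbhd_fiberNbhd_eq_filter_mem_image]
  exact h.cPw_filter_mem_and_label _ _ hi hpi

end CondIndepViews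

theorem nbhd_mistakes_inter_tiSet {w : X → W} {y g : X → Y} (hg : g.FactorsThrough w)
    (yt : X → Option Y) (i : Y) :
    nbhd (fiberNbhd w) ((TiSet y yt i).filter fun x => g x ≠ y x) ∩ TiSet y yt i =
      (TiSet y yt i).filter fun x => g x ≠ y x := by
  refine nbhd_fiberNbhd_filter_inter fun u hu x hx hux hne => ?_
  have hyu : y u = i := (mem_filter.mp hu).2.2
  have hyx : y x = i := (mem_filter.mp hx).2.2
  rwa [← hg hux, hyx, ← hyu]

theorem cond_indep_views_robust_and_exact_expansion_general
    {μ : X → ℝ} {y : X → Y} {v : X → V} {w : X → W} (hvw : CondIndepViews μ y v w)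
    {yt : X → Option Y} (hyt : yt.FactorsThrough v) {g : X → Y} (hg : g.FactorsThrough w) :
    (∀ x, rob μ (fiberNbhd w) g x = 0) ∧
      ∀ i : Y, 0 < Pw μ (univ.filter fun x => y x = i) →
        Pw μ (TiSet y yt i) ≠ 0 → Pw μ (SiGood y yt i) ≠ 0 →
        cPw μ (nbhd (fiberNbhd w) ((TiSet y yt i).filter fun x => g x ≠ y x)) (SiGood y yt i) =
          cPw μ ((TiSet y yt i).filter fun x => g x ≠ y x) (TiSet y yt i) := by
  refine ⟨rob_fiberNbhd_eq_zero μ hg, fun i hi hT hS => ?_⟩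
  have hyt_eq (o : Option Y) : (fun x => yt x = o).FactorsThrough v := hyt.comp_left (· = o)
  set U := (TiSet y yt i).filter fun x => g x ≠ y x
  rw [siGood_eq_filter] at hS ⊢
  calc cPw μ (nbhd (fiberNbhd w) U) (univ.filter fun x => yt x = some i ∧ y x = i)
      = cPw μ (nbhd (fiberNbhd w) U) (univ.filter fun x => y x = i) :=
        hvw.cPw_nbhd_filter_and_label U (hyt_eq (some i)) hi hS
    _ = cPw μ (nbhd (fiberNbhd w) U) (TiSet y yt i) :=
        (hvw.cPw_nbhd_filter_and_label U (hyt_eq none) hi hT).symm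
    _ = cPw μ U (TiSet y yt i) := by
        rw [← cPw_inter_right, nbhd_mistakes_inter_tiSet hg]

end Views

/-- Conditionally independent views give perfect robustness and
exact expansion; the co-training setting of Blum & Mitchell. -/
theorem cond_indep_views_robust_and_exact_expansion
    {X1 X2 : Type*} [Fintype X1] [DecidableEq X1] [Fintype X2] [DecidableEq X2]
    (μ : X1 × X2 → ℝ) (y : X1 × X2 → Y) (yt1 : X1 → Option Y)
    (hμ : ∀ x, 0 ≤ μ x) (hμ1 : ∑ x, μ x = 1)
    -- the pseudolabeler depends only on the first view
    (yt : X1 × X2 → Option Y) (hyt : ∀ x : X1 × X2, yt x = yt1 x.1)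
    -- conditional independence of the two views given the true label
    (hCI : ∀ (A : Finset X1) (B : Finset X2) (i : Y),
      0 < Pw μ (univ.filter fun x => y x = i) →
      cPw μ (univ.filter fun x : X1 × X2 => x.1 ∈ A ∧ x.2 ∈ B)
          (univ.filter fun x => y x = i) =
        cPw μ (univ.filter fun x : X1 × X2 => x.1 ∈ A)
            (univ.filter fun x => y x = i) *
          cPw μ (univ.filter fun x : X1 × X2 => x.2 ∈ B)
            (univ.filter fun x => y x = i))
    -- the neighborhood: all points sharing the second view
    (N : X1 × X2 → Finset (X1 × X2))
    (hNdef : ∀ x : X1 × X2, N x = univ.filter fun x' : X1 × X2 => x'.2 = x.2) :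
    -- (a) any classifier depending only on the second view is robust everywhere
    (∀ (g : X1 × X2 → Y) (g2 : X2 → Y), (∀ x, g x = g2 x.2) →
      ∀ x : X1 × X2, rob μ N g x = 0) ∧
    -- (b) exact expansion of mistake sets on the uncovered part
    (∀ (g : X1 × X2 → Y) (g2 : X2 → Y), (∀ x, g x = g2 x.2) →
      ∀ i : Y,
        0 < Pw μ (univ.filter fun x => y x = i) →
        0 < Pw μ (TiSet y yt i) →
        0 < Pw μ (SiGood y yt i) →
        cPw μ ((TiSet y yt i).filter fun x => g x ≠ y x) (TiSet y yt i) > 0 →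
        cPw μ (nbhd N ((TiSet y yt i).filter fun x => g x ≠ y x)) (SiGood y yt i) =
          cPw μ ((TiSet y yt i).filter fun x => g x ≠ y x) (TiSet y yt i)) := by
  obtain rfl : N = fiberNbhd Prod.snd := funext hNdef
  have hyt' : yt.FactorsThrough Prod.fst := fun x x' h => by rw [hyt, hyt, h]
  have general {g : X1 × X2 → Y} {g2 : X2 → Y} (hg : ∀ x, g x = g2 x.2) :=
    cond_indep_views_robust_and_exact_expansion_general (v := Prod.fst) (w := Prod.snd) hCI hyt'
      (g := g) fun x x' h => by rw [hg, hg, h]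
  exact ⟨fun _ _ hg => (general hg).1,
    fun _ _ hg i hi hT hS _ => (general hg).2 i hi hT.ne' hS.ne'⟩
end
end

section
/- (Symmetrization for empirical expansion.) Let A, B ⊆ X with P(A), P(B) > 0, let n : X → X be a fixed map with n(x) ∈ B for all x ∈ A, and let M be a (finite, since X is finite) family of subsets of B with q(U) := P(U|B) ≥ q̄ > 0 for every U ∈ M. For U ∈ M let p(U) = P({x : n(x) ∈ U} | A) and c(U) = p(U)/q(U). Draw an i.i.d. sample x_1,…,x_{n_A} ∼ P(·|A), z_1,…,z_{n_B} ∼ P(·|B), and an independent ghost sample x'_1,…,x'_{n_A} ∼ P(·|A), z'_1,…,z'_{n_B} ∼ P(·|B); let ĉ(U) and ĉ'(U) be the corresponding empirical ratios (1/n_A Σ_i 1[n(x_i) ∈ U])/(1/n_B Σ_j 1[z_j ∈ U]) on the original and ghost samples respectively, and set γ = n_B·q̄/n_A. Then for any t > 0 with n_A·t² ≥ (4 + √γ)²·log 16/(γ·q̄²): Pr[ sup_{U ∈ M} ( ĉ(U) − c(U) ) > t ] ≤ 2·Pr[ sup_{U ∈ M} ( ĉ(U) − ĉ'(U) ) > t/2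 ]. -/
open Finset
open scoped Classical

noncomputable section

variable {X : Type*} [Fintype X] [DecidableEq X]

/-- The conditional point mass function of `P(· | A)`. -/
def condPMF (μ : X → ℝ) (A : Finset X) (x : X) : ℝ :=
  (if x ∈ A then μ x else 0) / Pw μ A

/-- The probability that an i.i.d. sample from `P(· | A)` equals the tuple `xs`. -/
def prodW (μ : X → ℝ) (A : Finset X) {n : ℕ} (xs : Fin n → X) : ℝ :=
  ∏ j, condPMF μ A (xs j)

/-- Probability of an event `E` of two mutually independent i.i.d. samples,
of sizes `nA` from `P(· | A)` and `nB` from `P(· | B)`. -/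
def samplePr (μ : X → ℝ) (A B : Finset X) (nA nB : ℕ)
    (E : (Fin nA → X) → (Fin nB → X) → Prop) : ℝ :=
  ∑ xs : Fin nA → X, ∑ zs : Fin nB → X,
    prodW μ A xs * prodW μ B zs * (if E xs zs then 1 else 0)

/-- Probability of an event of two i.i.d. samples together with an independent
ghost copy of each. -/
def samplePr4 (μ : X → ℝ) (A B : Finset X) (nA nB : ℕ)
    (E : (Fin nA → X) → (Fin nB → X) → (Fin nA → X) → (Fin nB → X) → Prop) : ℝ :=
  ∑ xs : Fin nA → X, ∑ zs : Fin nB → X, ∑ xs' : Fin nA → X, ∑ zs' : Fin nB → X,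
    prodW μ A xs * prodW μ B zs * prodW μ A xs' * prodW μ B zs' *
      (if E xs zs xs' zs' then 1 else 0)

/-- Empirical frequency `(1/n)·Σ_j 1[g(x_j) ∈ U]` of a sample `xs`. -/
def empFreq (U : Finset X) (g : X → X) {n : ℕ} (xs : Fin n → X) : ℝ :=
  (∑ j, if g (xs j) ∈ U then (1 : ℝ) else 0) / n

/-- The empirical expansion ratio `ĉ(U) = p̂(U)/q̂(U)` of a pair of samples. -/
def empRatio (U : Finset X) (g : X → X) {nA nB : ℕ}
    (xs : Fin nA → X) (zs : Fin nB → X) : ℝ :=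
  empFreq U g xs / empFreq U id zs

/-!
Suppose `ĉ(U)` exceeds `c(U)` by more than `t`. If moreover `ĉ'(U) ≤ c(U) + t / 2`, then `ĉ(U)`
exceeds `ĉ'(U)` by more than `t / 2`. The ghost sample being independent of the original one, it
therefore suffices that for every single `U` the second inequality has probability at least `1 / 2`.

Put `k = c(U) + t / 2`. When `ĉ'(U) > k`, the linear statistic `p̂'(U) - k * q̂'(U)` is positive, so
it exceeds its mean `-q(U) * t / 2` by `q(U) * t / 2`. The condition on the sample sizes bounds its
variance by the square of that margin, and Cantelli's inequality gives probability at most `1 / 2`.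
The variance bound is only needed for `t / 2 ≤ n_B`, since `ĉ'(U) ≤ n_B` always.
-/

open MeasureTheory ProbabilityTheory

section Probability

variable {Ω : Type*} {mΩ : MeasurableSpace Ω} {ρ : Measure Ω} [IsProbabilityMeasure ρ]

/-- **Cantelli's inequality**: apply Markov's inequality to `(Y - E Y + c) ^ 2`, where
`c = Var Y / r` is the optimal shift. -/
lemma measureReal_ge_integral_add_le_variance_div {Y : Ω → ℝ} (hY : MemLp Y 2 ρ) {r : ℝ}
    (hr : 0 < r) :
    ρ.real {ω | ρ[Y] + r ≤ Y ω} ≤ Var[Y; ρ] / (Var[Y; ρ] + r ^ 2) := by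
  set v := Var[Y; ρ]
  have hv : 0 ≤ v := variance_nonneg Y ρ
  set Z : Ω → ℝ := fun ω ↦ Y ω + (v / r - ρ[Y])
  have hZ : MemLp Z 2 ρ := hY.add (memLp_const _)
  have integral_Z : ρ[Z] = v / r := by
    simp [Z, integral_add (hY.integrable one_le_two) (integrable_const _)]
  have variance_Z : Var[Z; ρ] = v := variance_add_const hY.aestronglyMeasurable _
  have integral_Z_sq : ∫ ω, Z ω ^ 2 ∂ρ = v + (v / r) ^ 2 := by
    have := variance_eq_sub hZ
    simp only [variance_Z, integral_Z, Pi.pow_apply] at this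
    linarith
  have markov : (v / r + r) ^ 2 * ρ.real {ω | (v / r + r) ^ 2 ≤ Z ω ^ 2} ≤ v + (v / r) ^ 2 :=
    integral_Z_sq ▸ mul_meas_ge_le_integral_of_nonneg
      (ae_of_all _ fun ω ↦ sq_nonneg (Z ω)) hZ.integrable_sq _
  have event_subset : {ω | ρ[Y] + r ≤ Y ω} ⊆ {ω | (v / r + r) ^ 2 ≤ Z ω ^ 2} := fun ω hω ↦
    pow_le_pow_left₀ (add_nonneg (div_nonneg hv hr.le) hr.le)
      (by simp only [Set.mem_ofPred_eq, Z] at hω ⊢; linarith) 2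
  calc ρ.real {ω | ρ[Y] + r ≤ Y ω}
      ≤ ρ.real {ω | (v / r + r) ^ 2 ≤ Z ω ^ 2} := measureReal_mono event_subset
    _ ≤ (v + (v / r) ^ 2) / (v / r + r) ^ 2 := by
        rwa [le_div_iff₀' (by positivity)]
    _ = v / (v + r ^ 2) := by field_simp; ring

lemma measureReal_ge_integral_add_le_half {Y : Ω → ℝ} (hY : MemLp Y 2 ρ) {r : ℝ}
    (hr : 0 < r) (hvar : Var[Y; ρ] ≤ r ^ 2) :
    ρ.real {ω | ρ[Y] + r ≤ Y ω} ≤ 1 / 2 := by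
  have hv : 0 ≤ Var[Y; ρ] := variance_nonneg Y ρ
  refine (measureReal_ge_integral_add_le_variance_div hY hr).trans ?_
  rw [div_le_div_iff₀ (by positivity) two_pos]
  linarith

lemma variance_indicator_one {S : Set Ω} (hS : MeasurableSet S) :
    Var[S.indicator 1; ρ] = ρ.real S * (1 - ρ.real S) := by
  have hsq : (S.indicator 1 : Ω → ℝ) ^ 2 = S.indicator 1 := by
    ext ω; by_cases h : ω ∈ S <;> simp [h]
  have hmem : MemLp (S.indicator 1 : Ω → ℝ) 2 ρ :=
    memLp_indicator_const 2 hS 1 (.inr (measure_ne_top ρ S))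
  rw [variance_eq_sub hmem, hsq, integral_indicator_one hS]
  ring

theorem measureReal_exists_lt_sub_le_two_mul_prod {ι : Type*} {M : Set ι} (hM : M.Countable)
    {f : ι → Ω → ℝ} (hf : ∀ i ∈ M, Measurable (f i)) (c : ι → ℝ) (t u : ℝ)
    (hhalf : ∀ i ∈ M, ρ.real {ω | c i + u < f i ω} ≤ 1 / 2) :
    ρ.real {ω | ∃ i ∈ M, t < f i ω - c i} ≤
      2 * (ρ.prod ρ).real {p | ∃ i ∈ M, t - u < f i p.1 - f i p.2} := by
  set D : Set (Ω × Ω) := {p | ∃ i ∈ M, t - u < f i p.1 - f i p.2}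
  have hD : MeasurableSet D := by
    have : D = ⋃ i ∈ M, {p | t - u < f i p.1 - f i p.2} := by ext; simp [D]
    rw [this]
    exact .biUnion hM fun i hi ↦ measurableSet_lt measurable_const
      (((hf i hi).comp measurable_fst).sub ((hf i hi).comp measurable_snd))
  have half_le_section : ∀ ω, (∃ i ∈ M, t < f i ω - c i) → 1 / 2 ≤ ρ (Prod.mk ω ⁻¹' D) := by
    rintro ω ⟨i, hi, hω⟩
    have hgood : 1 / 2 ≤ ρ.real {ω' | c i + u < f i ω'}ᶜ := by
      rw [probReal_compl_eq_one_sub (measurableSet_lt measurable_const (hf i hi))]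
      linarith [hhalf i hi]
    have hsub : {ω' | c i + u < f i ω'}ᶜ ⊆ Prod.mk ω ⁻¹' D := fun ω' hω' ↦
      ⟨i, hi, by simp only [Set.mem_compl_iff, Set.mem_ofPred_eq, not_lt] at hω'; linarith⟩
    calc (1 / 2 : ENNReal) = ENNReal.ofReal (1 / 2) := by simp
      _ ≤ ENNReal.ofReal (ρ.real (Prod.mk ω ⁻¹' D)) :=
          ENNReal.ofReal_le_ofReal (hgood.trans (measureReal_mono hsub))
      _ = ρ (Prod.mk ω ⁻¹' D) := ofReal_measureReal
  have markov : 1 / 2 * ρ {ω | ∃ i ∈ M, t < f i ω - c i} ≤ (ρ.prod ρ) D := by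
    rw [Measure.prod_apply hD]
    exact (mul_le_mul_right (measure_mono half_le_section) _).trans
      (mul_meas_ge_le_lintegral (measurable_measure_prodMk_left hD) _)
  have := ENNReal.toReal_mono (measure_ne_top _ _) markov
  simp only [ENNReal.toReal_mul, ENNReal.toReal_div, ENNReal.toReal_one,
    ENNReal.toReal_ofNat] at this
  simp only [measureReal_def]
  linarith

end Probability

section SampleFrequency

variable {α β : Type*}

/-- The empirical frequency of the event `S` in the sample `xs`; it is `0` for the empty sample. -/
def sampleFreq (S : Set α) {a : ℕ} (xs : Fin a → α) : ℝ := (∑ j, S.indicator 1 (xs j)) / a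

/-- The empirical ratio `ĉ = p̂ / q̂` of the frequency of `S` in the first sample to the frequency
of `T` in the second one; it is `0` when `T` is not hit. -/
def sampleRatio (S : Set α) (T : Set β) {a b : ℕ} (ω : (Fin a → α) × (Fin b → β)) : ℝ :=
  sampleFreq S ω.1 / sampleFreq T ω.2

lemma sampleFreq_nonneg (S : Set α) {a : ℕ} (xs : Fin a → α) : 0 ≤ sampleFreq S xs :=
  div_nonneg (sum_nonneg fun _ _ ↦ Set.indicator_nonneg (fun _ _ ↦ zero_le_one) _) (by positivity)

lemma sampleFreq_le_one (S : Set α) {a : ℕ} (xs : Fin a → α) : sampleFreq S xs ≤ 1 := by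
  refine div_le_one_of_le₀ ?_ (by positivity)
  calc ∑ j, S.indicator 1 (xs j) ≤ ∑ _j : Fin a, (1 : ℝ) :=
        sum_le_sum fun _ _ ↦ Set.indicator_le' (fun _ _ ↦ le_rfl) (fun _ _ ↦ zero_le_one) _
    _ = a := by simp

lemma inv_le_sampleFreq {S : Set α} {a : ℕ} {xs : Fin a → α} (h : sampleFreq S xs ≠ 0) :
    (a : ℝ)⁻¹ ≤ sampleFreq S xs := by
  obtain ⟨j, -, hj⟩ := exists_ne_zero_of_sum_ne_zero (div_ne_zero_iff.mp h).1
  rw [← one_div]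
  refine div_le_div_of_nonneg_right ?_ (by positivity)
  calc (1 : ℝ) = S.indicator 1 (xs j) := by simp [Set.mem_of_indicator_ne_zero hj]
    _ ≤ ∑ j, S.indicator 1 (xs j) := single_le_sum
        (fun _ _ ↦ Set.indicator_nonneg (fun _ _ ↦ zero_le_one) _) (mem_univ j)

lemma sampleRatio_le (S : Set α) (T : Set β) {a b : ℕ} (ω : (Fin a → α) × (Fin b → β)) :
    sampleRatio S T ω ≤ b := by
  rcases eq_or_ne (sampleFreq T ω.2) 0 with h | h
  · simp [sampleRatio, h]
  · calc sampleRatio S T ω ≤ 1 / sampleFreq T ω.2 :=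
          div_le_div_of_nonneg_right (sampleFreq_le_one S ω.1) (sampleFreq_nonneg T ω.2)
      _ ≤ b := by
          have hpos := (sampleFreq_nonneg T ω.2).lt_of_ne' h
          have hb : (0 : ℝ) < b := by
            refine Nat.cast_pos.mpr (Nat.pos_of_ne_zero ?_)
            rintro rfl
            simp [sampleFreq] at h
          rw [one_div]
          exact inv_le_of_inv_le₀ hb (inv_le_sampleFreq h)

variable [MeasurableSpace α] [MeasurableSpace β]

lemma measurable_sampleFreq {S : Set α} (hS : MeasurableSet S) {a : ℕ} :
    Measurable (sampleFreq S : (Fin a → α) → ℝ) := by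
  unfold sampleFreq
  fun_prop (disch := assumption)

lemma measurable_sampleRatio {S : Set α} (hS : MeasurableSet S) {T : Set β}
    (hT : MeasurableSet T) {a b : ℕ} :
    Measurable (sampleRatio S T : (Fin a → α) × (Fin b → β) → ℝ) :=
  ((measurable_sampleFreq hS).comp measurable_fst).div
    ((measurable_sampleFreq hT).comp measurable_snd)

lemma memLp_sampleFreq {S : Set α} (hS : MeasurableSet S) {a : ℕ} {ρ : Measure (Fin a → α)}
    [IsFiniteMeasure ρ] : MemLp (sampleFreq S) 2 ρ :=
  memLp_of_bounded (ae_of_all _ fun xs ↦ ⟨sampleFreq_nonneg S xs, sampleFreq_le_one S xs⟩)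
    (measurable_sampleFreq hS).aestronglyMeasurable 2

variable {P : Measure α} [IsProbabilityMeasure P] {Q : Measure β} [IsProbabilityMeasure Q]

lemma integral_sampleFreq {S : Set α} (hS : MeasurableSet S) {a : ℕ} (ha : 0 < a) :
    ∫ xs : Fin a → α, sampleFreq S xs ∂(Measure.pi fun _ ↦ P) = P.real S := by
  have hint : Integrable (S.indicator 1 : α → ℝ) P := (integrable_const 1).indicator hS
  have ha' : (a : ℝ) ≠ 0 := by positivity
  simp only [sampleFreq]
  rw [integral_div, integral_finsetSum _ fun j _ ↦ integrable_comp_eval hint]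
  simp_rw [integral_comp_eval (μ := fun _ : Fin a ↦ P) hint.aestronglyMeasurable,
    integral_indicator_one hS]
  simp [ha']

lemma variance_sampleFreq {S : Set α} (hS : MeasurableSet S) (a : ℕ) :
    Var[sampleFreq S; Measure.pi fun _ : Fin a ↦ P] = P.real S * (1 - P.real S) / a := by
  have hind : MemLp (S.indicator 1 : α → ℝ) 2 P :=
    memLp_indicator_const 2 hS 1 (.inr (measure_ne_top P S))
  have hsum : (sampleFreq S : (Fin a → α) → ℝ) =
      fun xs ↦ (a : ℝ)⁻¹ * (∑ j, fun ys : Fin a → α ↦ (S.indicator 1 (ys j) : ℝ)) xs := by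
    ext xs
    simp [sampleFreq, div_eq_inv_mul, Finset.sum_apply]
  rw [hsum, variance_const_mul, variance_sum_pi fun _ ↦ hind]
  simp only [variance_indicator_one hS, sum_const, card_univ, Fintype.card_fin, nsmul_eq_mul]
  rcases eq_or_ne a 0 with rfl | ha
  · simp
  · field_simp

/-- The joint law of two independent i.i.d. samples, `a` points from `P` and `b` points from `Q`. -/
abbrev sampleLaw (P : Measure α) (Q : Measure β) (a b : ℕ) :
    Measure ((Fin a → α) × (Fin b → β)) :=
  (Measure.pi fun _ ↦ P).prod (Measure.pi fun _ ↦ Q)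

lemma memLp_sampleFreq_sub_mul {S : Set α} (hS : MeasurableSet S) {T : Set β}
    (hT : MeasurableSet T) (k : ℝ) (a b : ℕ) :
    MemLp (fun ω ↦ sampleFreq S ω.1 - k * sampleFreq T ω.2) 2 (sampleLaw P Q a b) :=
  ((memLp_sampleFreq hS).comp_fst _).sub (((memLp_sampleFreq hT).const_mul k).comp_snd _)

lemma integral_sampleFreq_sub_mul {S : Set α} (hS : MeasurableSet S) {T : Set β}
    (hT : MeasurableSet T) (k : ℝ) {a b : ℕ} (ha : 0 < a) (hb : 0 < b) :
    ∫ ω, (sampleFreq S ω.1 - k * sampleFreq T ω.2) ∂(sampleLaw P Q a b) =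
      P.real S - k * Q.real T := by
  rw [integral_sub (((memLp_sampleFreq hS).comp_fst _).integrable one_le_two)
    ((((memLp_sampleFreq hT).const_mul k).comp_snd _).integrable one_le_two),
    integral_fun_fst, integral_fun_snd fun zs ↦ k * sampleFreq T zs, integral_const_mul,
    integral_sampleFreq hS ha, integral_sampleFreq hT hb]
  simp

lemma variance_sampleFreq_sub_mul {S : Set α} (hS : MeasurableSet S) {T : Set β}
    (hT : MeasurableSet T) (k : ℝ) (a b : ℕ) :
    Var[fun ω ↦ sampleFreq S ω.1 - k * sampleFreq T ω.2; sampleLaw P Q a b] =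
      P.real S * (1 - P.real S) / a + k ^ 2 * (Q.real T * (1 - Q.real T) / b) := by
  simp only [sub_eq_add_neg, ← neg_mul]
  rw [variance_add_prod (memLp_sampleFreq hS) ((memLp_sampleFreq hT).const_mul (-k)),
    variance_const_mul, variance_sampleFreq hS, variance_sampleFreq hT, neg_sq]
  simp only [sub_eq_add_neg]

end SampleFrequency

section RatioTail

lemma add_mul_one_add_sq_le {r v a : ℝ} (hr : 0 ≤ r) (hv : 0 ≤ v) (ha : 0 ≤ a)
    (hvr : v * r ≤ 1) (h : 11 / 4 * (a + 4 * v) ≤ r ^ 2) : a + v * (1 + r) ^ 2 ≤ r ^ 2 := by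
  have hv_le : v ≤ 9 / 20 := by
    have cube_le : 11 * v ^ 3 ≤ 1 := by
      calc 11 * v ^ 3 = 11 * v * v ^ 2 := by ring
        _ ≤ r ^ 2 * v ^ 2 := by gcongr; linarith
        _ = (v * r) ^ 2 := by ring
        _ ≤ 1 := pow_le_one₀ (by positivity) hvr
    by_contra! hlt
    have : (9 / 20 : ℝ) ^ 3 < v ^ 3 := by gcongr
    linarith
  -- The claim follows from `0 ≤ 7 / 11 * r ^ 2 + v * (3 - 2 * r - r ^ 2)`, which is affine in `v`.
  have at_endpoint : 0 ≤ 7 / 11 * r ^ 2 + 9 / 20 * (3 - 2 * r - r ^ 2) := by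
    nlinarith [sq_nonneg (r - 12 / 5)]
  nlinarith [mul_nonneg hv at_endpoint, mul_nonneg (sub_nonneg.mpr hv_le) (sq_nonneg r)]

lemma ratio_variance_le_sq {p q s a b : ℝ} (hp : p ∈ Set.Icc 0 1) (hq : 0 < q) (hq1 : q ≤ 1)
    (hs : 0 < s) (ha : 0 < a) (hb : 0 < b) (hsb : s ≤ b)
    (h : 11 / 4 * (1 / (4 * a) + 4 / (b * q)) ≤ (s * q) ^ 2) :
    p * (1 - p) / a + (p / q + s) ^ 2 * (q * (1 - q) / b) ≤ (s * q) ^ 2 := by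
  obtain ⟨hp0, hp1⟩ := hp
  have first_le : p * (1 - p) / a ≤ 1 / (4 * a) := by
    rw [div_le_div_iff₀ ha (by positivity)]
    nlinarith [mul_nonneg ha.le (sq_nonneg (2 * p - 1))]
  have second_le : (p / q + s) ^ 2 * (q * (1 - q) / b) ≤ 1 / (b * q) * (1 + s * q) ^ 2 :=
    calc (p / q + s) ^ 2 * (q * (1 - q) / b) = 1 / (b * q) * ((p + s * q) ^ 2 * (1 - q)) := by
          field_simp
      _ ≤ 1 / (b * q) * ((1 + s * q) ^ 2 * 1) := by gcongr; linarith
      _ = 1 / (b * q) * (1 + s * q) ^ 2 := by ring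
  have margin_le : 1 / (b * q) * (s * q) ≤ 1 := by
    rw [one_div_mul_eq_div, div_le_one (by positivity)]
    gcongr
  have := add_mul_one_add_sq_le (a := 1 / (4 * a)) (v := 1 / (b * q)) (by positivity)
    (by positivity) (by positivity) margin_le (by convert h using 3; ring)
  linarith

variable {α β : Type*} [MeasurableSpace α] [MeasurableSpace β]
  {P : Measure α} [IsProbabilityMeasure P] {Q : Measure β} [IsProbabilityMeasure Q]

theorem measureReal_lt_sampleRatio_le_half {S : Set α} (hS : MeasurableSet S) {T : Set β}
    (hT : MeasurableSet T) (hq : 0 < Q.real T) {a b : ℕ} (ha : 0 < a) (hb : 0 < b) {s : ℝ}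
    (hs : 0 < s) (h : 11 / 4 * (1 / (4 * a) + 4 / (b * Q.real T)) ≤ (s * Q.real T) ^ 2) :
    (sampleLaw P Q a b).real {ω | P.real S / Q.real T + s < sampleRatio S T ω} ≤ 1 / 2 := by
  set k := P.real S / Q.real T + s with hk
  have hp_div : 0 ≤ P.real S / Q.real T := by positivity
  rcases lt_or_ge (b : ℝ) s with hbs | hsb
  · have : {ω : (Fin a → α) × (Fin b → β) | k < sampleRatio S T ω} = ∅ :=
      Set.eq_empty_of_forall_notMem fun ω hω ↦ by
        linarith [Set.mem_ofPred.mp hω, sampleRatio_le S T ω]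
    simp [this]
  · have event_subset : {ω : (Fin a → α) × (Fin b → β) | k < sampleRatio S T ω} ⊆
        {ω | P.real S - k * Q.real T + s * Q.real T ≤ sampleFreq S ω.1 - k * sampleFreq T ω.2} := by
      intro ω hω
      have hfreq : 0 < sampleFreq T ω.2 := by
        refine (sampleFreq_nonneg T ω.2).lt_of_ne' fun h0 ↦ ?_
        simp only [Set.mem_ofPred_eq, sampleRatio, h0, div_zero] at hω
        linarith
      have hlt := (lt_div_iff₀ hfreq).mp hω
      have hkq : k * Q.real T = P.real S + s * Q.real T := by rw [hk]; field_simp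
      simp only [Set.mem_ofPred_eq]
      linarith
    refine (measureReal_mono event_subset).trans ?_
    rw [← integral_sampleFreq_sub_mul (P := P) (Q := Q) hS hT k ha hb]
    refine measureReal_ge_integral_add_le_half (memLp_sampleFreq_sub_mul hS hT k a b)
      (by positivity) ?_
    rw [variance_sampleFreq_sub_mul hS hT]
    exact ratio_variance_le_sq ⟨measureReal_nonneg, measureReal_le_one⟩ hq measureReal_le_one hs
      (by positivity) (by positivity) hsb h

lemma ratio_margin_of_sample_size {a b qbar q t : ℝ} (ha : 0 < a) (hb : 0 < b)
    (hqbar : 0 < qbar) (hq : qbar ≤ q)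
    (h : (4 + √(b * qbar / a)) ^ 2 * Real.log 16 / ((b * qbar / a) * qbar ^ 2) ≤ a * t ^ 2) :
    11 / 4 * (1 / (4 * a) + 4 / (b * q)) ≤ (t / 2 * q) ^ 2 := by
  set γ := b * qbar / a with hγ
  have hγ0 : 0 < γ := by positivity
  have log_ge : 11 / 4 ≤ Real.log 16 := by
    have : Real.log 16 = 4 * Real.log 2 := by
      rw [show (16 : ℝ) = 2 ^ 4 by norm_num, Real.log_pow]; norm_num
    linarith [Real.log_two_gt_d9]
  have sq_ge : 16 + γ ≤ (4 + √γ) ^ 2 := by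
    nlinarith [Real.sq_sqrt hγ0.le, Real.sqrt_nonneg γ]
  have size_ge : (16 + γ) * (11 / 4) ≤ a * t ^ 2 * (γ * qbar ^ 2) :=
    (mul_le_mul sq_ge log_ge (by norm_num) (by positivity)).trans
      ((div_le_iff₀ (by positivity)).mp h)
  calc 11 / 4 * (1 / (4 * a) + 4 / (b * q)) ≤ 11 / 4 * (1 / (4 * a) + 4 / (b * qbar)) := by gcongr
    _ = (16 + γ) * (11 / 4) / (4 * a * γ) := by rw [hγ]; field_simp; ring
    _ ≤ a * t ^ 2 * (γ * qbar ^ 2) / (4 * a * γ) := by gcongr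
    _ = (t / 2 * qbar) ^ 2 := by field_simp; norm_num
    _ ≤ (t / 2 * q) ^ 2 := by rw [mul_pow, mul_pow]; gcongr

theorem symmetrization_empirical_expansion_general {ι : Type*} {M : Set ι} (hM : M.Countable)
    {S : ι → Set α} (hS : ∀ i ∈ M, MeasurableSet (S i))
    {T : ι → Set β} (hT : ∀ i ∈ M, MeasurableSet (T i))
    {qbar t : ℝ} (hqbar : 0 < qbar) (hq : ∀ i ∈ M, qbar ≤ Q.real (T i))
    {nA nB : ℕ} (hnA : 0 < nA) (hnB : 0 < nB) (ht : 0 < t)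
    (htlarge : (4 + √(nB * qbar / nA)) ^ 2 * Real.log 16 / ((nB * qbar / nA) * qbar ^ 2) ≤
      nA * t ^ 2) :
    (sampleLaw P Q nA nB).real
        {ω | ∃ i ∈ M, t < sampleRatio (S i) (T i) ω - P.real (S i) / Q.real (T i)} ≤
      2 * ((sampleLaw P Q nA nB).prod (sampleLaw P Q nA nB)).real
        {p | ∃ i ∈ M, t / 2 < sampleRatio (S i) (T i) p.1 - sampleRatio (S i) (T i) p.2} := by
  simpa only [sub_half] using measureReal_exists_lt_sub_le_two_mul_prod hM
    (fun i hi ↦ measurable_sampleRatio (hS i hi) (hT i hi)) _ t (t / 2) fun i hi ↦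
      measureReal_lt_sampleRatio_le_half (hS i hi) (hT i hi) (hqbar.trans_le (hq i hi)) hnA hnB
        (half_pos ht) (ratio_margin_of_sample_size (Nat.cast_pos.mpr hnA) (Nat.cast_pos.mpr hnB)
          hqbar (hq i hi) htlarge)

end RatioTail

section WeightedSpace

lemma measureReal_eq_sum_mul_ite {Ω : Type*} [Fintype Ω] [MeasurableSpace Ω]
    [MeasurableSingletonClass Ω] (ρ : Measure Ω) [IsFiniteMeasure ρ] (E : Ω → Prop) :
    ρ.real {ω | E ω} = ∑ ω, ρ.real {ω} * (if E ω then 1 else 0) := by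
  have := sum_measureReal_singleton (μ := ρ) (univ.filter E)
  rw [coe_filter_univ] at this
  rw [← this, sum_filter]
  simp

variable {α : Type*} [Fintype α] [MeasurableSpace α]

/-- The measure on a finite space with the point weights `μ`, which are meant to be nonnegative
(negative ones count as `0`). Its conditional measures are the laws `P(· | A)`. -/
def weightMeasure (μ : α → ℝ) : Measure α := ∑ x, ENNReal.ofReal (μ x) • Measure.dirac x

instance (μ : α → ℝ) : IsFiniteMeasure (weightMeasure μ) :=
  ⟨by simp [weightMeasure, Measure.finsetSum_apply, ENNReal.sum_lt_top]⟩

variable [MeasurableSingletonClass α] {μ : α → ℝ}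

lemma weightMeasure_real_coe (hμ : ∀ x, 0 ≤ μ x) (A : Finset α) :
    (weightMeasure μ).real A = Pw μ A := by
  have : (weightMeasure μ) A = ∑ x ∈ A, ENNReal.ofReal (μ x) := by
    simp [weightMeasure, Measure.finsetSum_apply, Set.indicator_apply, sum_ite_mem]
  rw [measureReal_def, this, ENNReal.toReal_sum fun _ _ ↦ ENNReal.ofReal_ne_top]
  exact sum_congr rfl fun x _ ↦ ENNReal.toReal_ofReal (hμ x)

lemma isProbabilityMeasure_cond_weightMeasure (hμ : ∀ x, 0 ≤ μ x) {A : Finset α}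
    (hA : 0 < Pw μ A) : IsProbabilityMeasure (weightMeasure μ)[|A] := by
  refine cond_isProbabilityMeasure fun h ↦ hA.ne' ?_
  rw [← weightMeasure_real_coe hμ, measureReal_def, h, ENNReal.toReal_zero]

variable [DecidableEq α]

lemma cond_weightMeasure_real_coe (hμ : ∀ x, 0 ≤ μ x) (U A : Finset α) :
    (weightMeasure μ)[|A].real U = cPw μ U A := by
  rw [measureReal_def, cond_apply A.measurableSet, ENNReal.toReal_mul, ENNReal.toReal_inv,
    ← measureReal_def, ← measureReal_def, ← coe_inter, weightMeasure_real_coe hμ,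
    weightMeasure_real_coe hμ, inter_comm, cPw, inv_mul_eq_div]

lemma cond_weightMeasure_real_singleton (hμ : ∀ x, 0 ≤ μ x) (A : Finset α) (x : α) :
    (weightMeasure μ)[|A].real {x} = condPMF μ A x := by
  rw [← coe_singleton, cond_weightMeasure_real_coe hμ, cPw, condPMF]
  by_cases hx : x ∈ A <;> simp [Pw, hx]

lemma pi_cond_weightMeasure_real_singleton (hμ : ∀ x, 0 ≤ μ x) {A : Finset α}
    {m : ℕ} (xs : Fin m → α) :
    (Measure.pi fun _ ↦ (weightMeasure μ)[|A]).real {xs} = prodW μ A xs := by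
  simp only [measureReal_def, Measure.pi_singleton, ENNReal.toReal_prod, prodW,
    ← cond_weightMeasure_real_singleton hμ]

lemma samplePr_eq_measureReal (hμ : ∀ x, 0 ≤ μ x) (A B : Finset α) (nA nB : ℕ)
    (E : (Fin nA → α) → (Fin nB → α) → Prop) :
    samplePr μ A B nA nB E =
      (sampleLaw (weightMeasure μ)[|A] (weightMeasure μ)[|B] nA nB).real {ω | E ω.1 ω.2} := by
  rw [measureReal_eq_sum_mul_ite, Fintype.sum_prod_type, samplePr]
  simp only [← Set.singleton_prod_singleton, measureReal_prod_prod,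
    pi_cond_weightMeasure_real_singleton hμ]

lemma samplePr4_eq_measureReal (hμ : ∀ x, 0 ≤ μ x) (A B : Finset α) (nA nB : ℕ)
    (E : (Fin nA → α) → (Fin nB → α) → (Fin nA → α) → (Fin nB → α) → Prop) :
    samplePr4 μ A B nA nB E =
      ((sampleLaw (weightMeasure μ)[|A] (weightMeasure μ)[|B] nA nB).prod
        (sampleLaw (weightMeasure μ)[|A] (weightMeasure μ)[|B] nA nB)).real
          {p | E p.1.1 p.1.2 p.2.1 p.2.2} := by
  rw [measureReal_eq_sum_mul_ite, samplePr4]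
  simp only [Fintype.sum_prod_type, ← Set.singleton_prod_singleton, measureReal_prod_prod,
    pi_cond_weightMeasure_real_singleton hμ, mul_assoc]

end WeightedSpace

lemma empFreq_eq_sampleFreq {α : Type*} [DecidableEq α] (U : Finset α) (g : α → α) {m : ℕ}
    (xs : Fin m → α) :
    empFreq U g xs = sampleFreq (g ⁻¹' U) xs := by
  simp [empFreq, sampleFreq, Set.indicator_apply]

lemma empRatio_eq_sampleRatio {α : Type*} [DecidableEq α] (U : Finset α) (g : α → α) {nA nB : ℕ}
    (xs : Fin nA → α) (zs : Fin nB → α) :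
    empRatio U g xs zs = sampleRatio (g ⁻¹' U) (U : Set α) (xs, zs) := by
  simp only [empRatio, sampleRatio, empFreq_eq_sampleFreq, Set.preimage_id]

/-- Lemma `lem:symm`: symmetrization for empirical expansion. -/
theorem symmetrization_empirical_expansion
    (μ : X → ℝ) (A B : Finset X) (n : X → X) (M : Finset (Finset X))
    (qbar t : ℝ) (nA nB : ℕ)
    (hμ : ∀ x, 0 ≤ μ x) (hμ1 : ∑ x, μ x = 1)
    (hA : 0 < Pw μ A) (hB : 0 < Pw μ B)
    (hn : ∀ x ∈ A, n x ∈ B)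
    (hMB : ∀ U ∈ M, U ⊆ B)
    (hqbar : 0 < qbar) (hq : ∀ U ∈ M, qbar ≤ cPw μ U B)
    (hnA : 0 < nA) (hnB : 0 < nB)
    (ht : 0 < t)
    (htlarge : (nA : ℝ) * t ^ 2 ≥
      (4 + Real.sqrt (nB * qbar / nA)) ^ 2 * Real.log 16 /
        ((nB * qbar / nA) * qbar ^ 2)) :
    samplePr μ A B nA nB (fun xs zs =>
        ∃ U ∈ M, empRatio U n xs zs -
          cPw μ (univ.filter fun x => n x ∈ U) A / cPw μ U B > t) ≤
      2 * samplePr4 μ A B nA nB (fun xs zs xs' zs' =>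
        ∃ U ∈ M, empRatio U n xs zs - empRatio U n xs' zs' > t / 2) := by
  let _ : MeasurableSpace X := ⊤
  have : IsProbabilityMeasure (weightMeasure μ)[|A] :=
    isProbabilityMeasure_cond_weightMeasure hμ hA
  have : IsProbabilityMeasure (weightMeasure μ)[|B] :=
    isProbabilityMeasure_cond_weightMeasure hμ hB
  have hp (U : Finset X) : (weightMeasure μ)[|A].real (n ⁻¹' U) =
      cPw μ (univ.filter fun x => n x ∈ U) A := by
    rw [← cond_weightMeasure_real_coe hμ]
    simp [Set.preimage]
  simp only [samplePr_eq_measureReal hμ, samplePr4_eq_measureReal hμ, empRatio_eq_sampleRatio,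
    ← hp, ← cond_weightMeasure_real_coe hμ] at hq ⊢
  exact symmetrization_empirical_expansion_general M.countable_toSet
    (fun U _ ↦ .of_discrete) (fun U _ ↦ .of_discrete) hqbar hq hnA hnB ht htlarge
end
end
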